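/- arXiv:2305.03676 — 4 statements merged into one kernel-verified Lean document; each statement's English description precedes it below -/
import Mathlib

section
/- Fix R₀ ≥ 0 and for t ≥ 0 set Λ(t) := L((t − R₀)⁺) and R(t) := S(Λ(t)) + R₀ − t. Then for all t, s ≥ 0, Λ(t+s) − Λ(t) = inf{ r > 0 : S(r + Λ(t)) − S(Λ(t)) > s − R(t) }. Equivalently, Λ(t+s) − Λ(t) = L̃((s − R(t))⁺), where L̃ is the inverse of the shifted function S̃(r) := S(r + Λ(t)) − S(Λ(t)), i.e. L̃(u) := inf{r > 0 : S̃(r) > u}. -/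
/-!
Shifting a monotone path by a time `c` that precedes its passage above `u` shortens the passage
time by exactly `c`. Apply this with `c = L v`, `v = (t - R₀)⁺` and `u = (t + s - R₀)⁺ ≥ v`. Since
the path is above `v ≥ 0` strictly after `L v`, the positive part in `u` does not affect the
passage time of the shifted path `S (· + L v)`; since `S` is strictly increasing, the one in
`(s - R t)⁺` does not affect that of `S (· + L v) - S (L v)`.
-/

open Set Filter

section FirstPassage

variable {β : Type*}

/-- The first time the path `S`, run over positive times, exceeds the level `u`. As a function of
`u` it is the right-continuous inverse of a nondecreasing `S`. It takes the junk value `0` at levels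
that `S` never exceeds. -/
noncomputable def firstPassage [LT β] (S : ℝ → β) (u : β) : ℝ :=
  sInf {r | 0 < r ∧ u < S r}

lemma firstPassage_nonneg [LT β] (S : ℝ → β) (u : β) : 0 ≤ firstPassage S u :=
  Real.sInf_nonneg fun _ hr => hr.1.le

lemma firstPassage_le [LT β] {S : ℝ → β} {u : β} {r : ℝ} (hr : 0 < r) (hu : u < S r) :
    firstPassage S u ≤ r :=
  csInf_le ⟨0, fun _ hx => hx.1.le⟩ ⟨hr, hu⟩

lemma firstPassage_le_firstPassage [Preorder β] {S : ℝ → β} {u v : β} (hvu : v ≤ u)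
    (hu : ∃ r, 0 < r ∧ u < S r) : firstPassage S v ≤ firstPassage S u :=
  le_csInf hu fun _ hr => firstPassage_le hr.1 (hvu.trans_lt hr.2)

lemma lt_of_firstPassage_lt [Preorder β] {S : ℝ → β} {u : β} {r : ℝ}
    (hS : MonotoneOn S (Ioi 0)) (hu : ∃ r, 0 < r ∧ u < S r) (hr : firstPassage S u < r) :
    u < S r := by
  obtain ⟨x, ⟨hx, hux⟩, hxr⟩ := exists_lt_of_csInf_lt hu hr
  exact hux.trans_le (hS hx (hx.trans hxr) hxr.le)

lemma firstPassage_le_iff [Preorder β] {S : ℝ → β} {u : β} {a : ℝ}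
    (hS : MonotoneOn S (Ioi 0)) (hu : ∃ r, 0 < r ∧ u < S r) (ha : 0 ≤ a) :
    firstPassage S u ≤ a ↔ ∀ r, a < r → u < S r :=
  ⟨fun h _ hr => lt_of_firstPassage_lt hS hu (h.trans_lt hr),
    fun h => le_of_forall_gt_imp_ge_of_dense fun r hr => firstPassage_le (ha.trans_lt hr) (h r hr)⟩

lemma firstPassage_comp_add_right [Preorder β] {S : ℝ → β} {u : β} {c : ℝ}
    (hS : MonotoneOn S (Ioi 0)) (hu : ∃ r, 0 < r ∧ u < S r) (hc : 0 ≤ c)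
    (hcu : c ≤ firstPassage S u) :
    firstPassage (fun r => S (r + c)) u = firstPassage S u - c := by
  have hshift_mono : MonotoneOn (fun r => S (r + c)) (Ioi 0) := fun x hx y hy hxy =>
    hS (add_pos_of_pos_of_nonneg hx hc) (add_pos_of_pos_of_nonneg hy hc) (by gcongr)
  have hshift_exceeds : ∃ r, 0 < r ∧ u < S (r + c) := by
    obtain ⟨r, hr, hur⟩ := hu
    have hrc : r ≤ r + c := le_add_of_nonneg_right hc
    exact ⟨r, hr, hur.trans_le (hS hr (hr.trans_le hrc) hrc)⟩
  refine eq_of_forall_ge_iff fun a => ?_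
  rcases lt_or_ge a 0 with ha | ha
  · exact iff_of_false (ha.trans_le (firstPassage_nonneg _ _)).not_ge
      (ha.trans_le (sub_nonneg.2 hcu)).not_ge
  · rw [firstPassage_le_iff hshift_mono hshift_exceeds ha, sub_le_iff_le_add,
      firstPassage_le_iff hS hu (add_nonneg ha hc)]
    exact ⟨fun h r hr => by simpa only [sub_add_cancel] using h (r - c) (lt_sub_iff_add_lt.2 hr),
      fun h r hr => h (r + c) (by gcongr)⟩

lemma firstPassage_sub_const [AddGroup β] [LT β] [AddRightStrictMono β]
    (S : ℝ → β) (b u : β) : firstPassage (fun r => S r - b) u = firstPassage S (u + b) := by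
  simp only [firstPassage, lt_sub_iff_add_lt]

lemma firstPassage_max_of_forall_lt [LinearOrder β] {S : ℝ → β} {b : β}
    (hb : ∀ r, 0 < r → b < S r) (u : β) : firstPassage S (max u b) = firstPassage S u := by
  unfold firstPassage
  congr 1 with r
  exact and_congr_right fun hr => max_lt_iff.trans (and_iff_left (hb r hr))

end FirstPassage

section Drift

variable {f : ℝ → ℝ} {κ a : ℝ}

lemma strictMonoOn_of_mul_sub_le (hκ : 0 < κ)
    (hf : ∀ ⦃x y : ℝ⦄, a ≤ x → x ≤ y → κ * (y - x) ≤ f y - f x) : StrictMonoOn f (Ici a) :=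
  fun _ hx _ _ hxy => sub_pos.1 ((mul_pos hκ (sub_pos.2 hxy)).trans_le (hf hx hxy.le))

lemma tendsto_atTop_of_mul_sub_le (hκ : 0 < κ)
    (hf : ∀ ⦃x y : ℝ⦄, a ≤ x → x ≤ y → κ * (y - x) ≤ f y - f x) : Tendsto f atTop atTop := by
  have hline : Tendsto (fun x => κ * (x - a) + f a) atTop atTop :=
    tendsto_atTop_add_const_right _ _
      ((tendsto_atTop_add_const_right _ (-a) tendsto_id).const_mul_atTop hκ)
  refine tendsto_atTop_mono' _ ?_ hline
  filter_upwards [eventually_ge_atTop a] with x hx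
  exact le_sub_iff_add_le.1 (hf le_rfl hx)

end Drift

theorem inverse_subordinator_shift_identity_general {S L Λ R : ℝ → ℝ} {R₀ : ℝ}
    (hS : StrictMonoOn S (Ici 0)) (hS_top : Tendsto S atTop atTop)
    (hL : ∀ t : ℝ, L t = sInf {r : ℝ | 0 < r ∧ t < S r})
    (hΛ : ∀ t : ℝ, Λ t = L (max (t - R₀) 0))
    (hR : ∀ t : ℝ, R t = S (Λ t) + R₀ - t) {t s : ℝ} (hs : 0 ≤ s) :
    Λ (t + s) - Λ t = sInf {r : ℝ | 0 < r ∧ s - R t < S (r + Λ t) - S (Λ t)} ∧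
    Λ (t + s) - Λ t
      = sInf {r : ℝ | 0 < r ∧ max (s - R t) 0 < S (r + Λ t) - S (Λ t)} := by
  obtain rfl : L = firstPassage S := funext hL
  have hmono : MonotoneOn S (Ioi 0) := hS.monotoneOn.mono Ioi_subset_Ici_self
  have hexceeds (u : ℝ) : ∃ r, 0 < r ∧ u < S r :=
    ((eventually_gt_atTop 0).and (hS_top.eventually_gt_atTop u)).exists
  have hΛ_nonneg : 0 ≤ Λ t := hΛ t ▸ firstPassage_nonneg _ _
  have hΛ_le : Λ t ≤ firstPassage S (max (t + s - R₀) 0) :=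
    hΛ t ▸ firstPassage_le_firstPassage (max_le_max_right 0 (by linarith)) (hexceeds _)
  have hpos (r : ℝ) (hr : 0 < r) : 0 < S (r + Λ t) :=
    (le_max_right (t - R₀) 0).trans_lt
      (lt_of_firstPassage_lt hmono (hexceeds _) (hΛ t ▸ lt_add_of_pos_left _ hr))
  have hincr (r : ℝ) (hr : 0 < r) : 0 < S (r + Λ t) - S (Λ t) :=
    sub_pos.2 (hS hΛ_nonneg (add_nonneg hr.le hΛ_nonneg) (lt_add_of_pos_left _ hr))
  have hfirst : Λ (t + s) - Λ t = firstPassage (fun r => S (r + Λ t) - S (Λ t)) (s - R t) :=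
    calc Λ (t + s) - Λ t
        = firstPassage (fun r => S (r + Λ t)) (max (t + s - R₀) 0) := by
          rw [firstPassage_comp_add_right hmono (hexceeds _) hΛ_nonneg hΛ_le, hΛ (t + s)]
      _ = firstPassage (fun r => S (r + Λ t)) (s - R t + S (Λ t)) := by
          rw [firstPassage_max_of_forall_lt hpos, hR]
          congr 1
          ring
      _ = firstPassage (fun r => S (r + Λ t) - S (Λ t)) (s - R t) :=
          (firstPassage_sub_const _ _ _).symm
  exact ⟨hfirst, hfirst.trans (firstPassage_max_of_forall_lt hincr _).symm⟩

/-- Fix `R₀ ≥ 0`, set `Λ t = L ((t - R₀)⁺)` and `R t = S (Λ t) + R₀ - t`.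
Then for all `t, s ≥ 0`,
`Λ (t+s) - Λ t = inf {r > 0 : S (r + Λ t) - S (Λ t) > s - R t}`;
equivalently `Λ (t+s) - Λ t = L̃ ((s - R t)⁺)` where `L̃` is the inverse of the
shifted path `S̃ r = S (r + Λ t) - S (Λ t)`. -/
theorem inverse_subordinator_shift_identity
    (κ : ℝ) (S L : ℝ → ℝ)
    (hκ : 0 < κ)
    (hS0 : S 0 = 0)
    (hSmono : ∀ ⦃a b : ℝ⦄, 0 ≤ a → a ≤ b → S a ≤ S b)
    (hSrc : ∀ a : ℝ, 0 ≤ a → ContinuousWithinAt S (Set.Ici a) a)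
    (hdrift : ∀ ⦃a b : ℝ⦄, 0 ≤ a → a ≤ b → κ * (b - a) ≤ S b - S a)
    (hL : ∀ t : ℝ, L t = sInf {r : ℝ | 0 < r ∧ t < S r})
    (R₀ : ℝ) (hR₀ : 0 ≤ R₀)
    (Λ R : ℝ → ℝ)
    (hΛ : ∀ t : ℝ, Λ t = L (max (t - R₀) 0))
    (hR : ∀ t : ℝ, R t = S (Λ t) + R₀ - t) :
    ∀ t : ℝ, 0 ≤ t → ∀ s : ℝ, 0 ≤ s →
      Λ (t + s) - Λ t = sInf {r : ℝ | 0 < r ∧ s - R t < S (r + Λ t) - S (Λ t)} ∧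
      Λ (t + s) - Λ t
        = sInf {r : ℝ | 0 < r ∧ max (s - R t) 0 < S (r + Λ t) - S (Λ t)} :=
  fun _ _ _ hs => inverse_subordinator_shift_identity_general
    (strictMonoOn_of_mul_sub_le hκ hdrift) (tendsto_atTop_of_mul_sub_le hκ hdrift) hL hΛ hR hs
end

section
/- Fix R₀ ≥ 0 and for t ≥ 0 set R(t) := S(L((t − R₀)⁺)) + R₀ − t. If t ≥ 0 satisfies R(t) > 0, then the map v ↦ L((v − R₀)⁺) is constant on the interval [t, t + R(t)); in particular its right derivative at t exists and equals 0. -/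
/-!
Let `L` be the first passage time of `S`, and let `s ≤ w < S (L s)` with `S 0 ≤ w`. The first
passage above `s` already lands above `w`: since `L s` is positive, it competes in the infimum
defining `L w`, so `L w ≤ L s`, and the reverse inequality is monotonicity of `L`. With
`s = (t - R₀)⁺` and `w = v - R₀`, the bound `w < S (L s)` says that `v < t + R t`, so the clock
stands still until time `t + R t`. While `v ≤ R₀`, the truncation alone keeps it still.
-/

open Set

theorem hasDerivWithinAt_Ici_zero_of_eqOn_Ico {F : Type*} [NormedAddCommGroup F] [NormedSpace ℝ F]
    {f : ℝ → F} {a b : ℝ} (hab : a < b) (hf : EqOn f (fun _ => f a) (Ico a b)) :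
    HasDerivWithinAt f 0 (Ici a) a :=
  ((hasDerivWithinAt_const a (Ico a b) (f a)).congr hf rfl).mono_of_mem_nhdsWithin
    (Ico_mem_nhdsGE hab)

section FirstPassage

variable {α : Type*}

/-- The first passage time of the path `S` above the level `x`, i.e. the right-continuous inverse
of `S`. The infimum runs over positive times because `S` is meant to be a path on `[0, ∞)`. If `S`
never exceeds `x` at a positive time, the value is `0` instead of `∞`. -/
noncomputable def firstPassageTime [LT α] (S : ℝ → α) (x : α) : ℝ :=
  sInf {r : ℝ | 0 < r ∧ x < S r}

theorem firstPassageTime_nonneg [LT α] (S : ℝ → α) (x : α) : 0 ≤ firstPassageTime S x :=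
  Real.sInf_nonneg fun _ hr => hr.1.le

theorem firstPassageTime_le [LT α] {S : ℝ → α} {x : α} {r : ℝ} (hr : 0 < r) (hx : x < S r) :
    firstPassageTime S x ≤ r :=
  csInf_le ⟨0, fun _ h => h.1.le⟩ ⟨hr, hx⟩

theorem firstPassageTime_le_firstPassageTime [Preorder α] {S : ℝ → α} {x y : α} {r : ℝ}
    (hxy : x ≤ y) (hr : 0 < r) (hy : y < S r) :
    firstPassageTime S x ≤ firstPassageTime S y :=
  le_csInf ⟨r, hr, hy⟩ fun _ h => firstPassageTime_le h.1 (hxy.trans_lt h.2)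

theorem firstPassageTime_pos [Preorder α] {S : ℝ → α} {x y : α} (h0 : S 0 ≤ y)
    (hy : y < S (firstPassageTime S x)) : 0 < firstPassageTime S x :=
  (firstPassageTime_nonneg S x).lt_of_ne fun h => (h0.trans_lt hy).ne (congrArg S h)

theorem firstPassageTime_eq_of_lt [Preorder α] {S : ℝ → α} {x y : α} (h0 : S 0 ≤ y) (hxy : x ≤ y)
    (hy : y < S (firstPassageTime S x)) : firstPassageTime S y = firstPassageTime S x :=
  have hpos : 0 < firstPassageTime S x := firstPassageTime_pos h0 hy
  (firstPassageTime_le hpos hy).antisymm (firstPassageTime_le_firstPassageTime hxy hpos hy)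

theorem firstPassageTime_max_eq_of_lt [LinearOrder α] {S : ℝ → α} {x y c : α} (h0 : S 0 ≤ c)
    (hxy : x ≤ y) (hy : y < S (firstPassageTime S (max x c))) :
    firstPassageTime S (max y c) = firstPassageTime S (max x c) := by
  rcases le_total y c with hyc | hcy
  · rw [max_eq_right hyc, max_eq_right (hxy.trans hyc)]
  · rw [max_eq_left hcy]
    exact firstPassageTime_eq_of_lt (h0.trans hcy) (max_le hxy hcy) hy

end FirstPassage

/-- The overshoot process `R` with initial value `R₀`: the height above the level `t` at which the
path `R₀ + S` lands at its first passage above `t`. Levels `t ≤ R₀` are truncated to `R₀`. -/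
noncomputable def overshoot (S : ℝ → ℝ) (R₀ t : ℝ) : ℝ :=
  S (firstPassageTime S (max (t - R₀) 0)) + R₀ - t

theorem firstPassageTime_eq_of_lt_add_overshoot {S : ℝ → ℝ} {R₀ t v : ℝ} (hS0 : S 0 ≤ 0)
    (htv : t ≤ v) (hv : v < t + overshoot S R₀ t) :
    firstPassageTime S (max (v - R₀) 0) = firstPassageTime S (max (t - R₀) 0) := by
  refine firstPassageTime_max_eq_of_lt hS0 (sub_le_sub_right htv R₀) ?_
  rw [overshoot] at hv
  linarith

theorem inverse_subordinator_frozen_during_overshoot_general {S : ℝ → ℝ} (hS0 : S 0 ≤ 0)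
    {R₀ t : ℝ} (hRt : 0 < overshoot S R₀ t) :
    (∀ v : ℝ, t ≤ v → v < t + overshoot S R₀ t →
      firstPassageTime S (max (v - R₀) 0) = firstPassageTime S (max (t - R₀) 0)) ∧
    HasDerivWithinAt (fun v : ℝ => firstPassageTime S (max (v - R₀) 0)) 0 (Ici t) t :=
  ⟨fun _ => firstPassageTime_eq_of_lt_add_overshoot hS0,
    hasDerivWithinAt_Ici_zero_of_eqOn_Ico (lt_add_of_pos_right t hRt) fun _ hv =>
      firstPassageTime_eq_of_lt_add_overshoot hS0 hv.1 hv.2⟩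

/-- Fix `R₀ ≥ 0` and set `R t = S (L ((t - R₀)⁺)) + R₀ - t`.  If `t ≥ 0` satisfies
`R t > 0`, then `v ↦ L ((v - R₀)⁺)` is constant on `[t, t + R t)`; in particular its
right derivative at `t` exists and equals `0`. -/
theorem inverse_subordinator_frozen_during_overshoot
    (κ : ℝ) (S L : ℝ → ℝ)
    (hκ : 0 < κ)
    (hS0 : S 0 = 0)
    (hSmono : ∀ ⦃a b : ℝ⦄, 0 ≤ a → a ≤ b → S a ≤ S b)
    (hSrc : ∀ a : ℝ, 0 ≤ a → ContinuousWithinAt S (Set.Ici a) a)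
    (hdrift : ∀ ⦃a b : ℝ⦄, 0 ≤ a → a ≤ b → κ * (b - a) ≤ S b - S a)
    (hL : ∀ t : ℝ, L t = sInf {r : ℝ | 0 < r ∧ t < S r})
    (R₀ : ℝ) (hR₀ : 0 ≤ R₀)
    (R : ℝ → ℝ)
    (hR : ∀ t : ℝ, R t = S (L (max (t - R₀) 0)) + R₀ - t) :
    ∀ t : ℝ, 0 ≤ t → 0 < R t →
      (∀ v : ℝ, t ≤ v → v < t + R t →
        L (max (v - R₀) 0) = L (max (t - R₀) 0)) ∧
      HasDerivWithinAt (fun v : ℝ => L (max (v - R₀) 0)) 0 (Set.Ici t) t := by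
  obtain rfl : L = firstPassageTime S := funext hL
  obtain rfl : R = overshoot S R₀ := funext hR
  exact fun _ _ => inverse_subordinator_frozen_during_overshoot_general hS0.le
end

section
/- Let x₀ ∈ ℝ and let a ∈ [0, T). Then c := 2(e^{−T} − x₀)/(e^{−2T} + 1) is the unique real number satisfying the matching equation c·e^{−a} = φ(a)·(e^{a}x₀ + (c/2)(e^{a} − e^{−a})) + ψ(a); in particular the solution c does not depend on a. -/
/-! Multiplied by `e^{2(a-T)} + 1`, the matching equation becomes linear in `c` with no
denominators. The terms `±c e^{-a}` cancel, and since `e^{2(a-T)} e^{-a} = e^a e^{-2T}`, every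
surviving term carries the factor `e^a`. Dividing by it leaves
`c (e^{-2T} + 1) = 2 (e^{-T} - x₀)`, in which `a` no longer occurs. -/

theorem exp_two_mul_sub_mul_exp_neg (T a : ℝ) :
    Real.exp (2 * (a - T)) * Real.exp (-a) = Real.exp a * Real.exp (-2 * T) := by
  rw [← Real.exp_add, ← Real.exp_add]
  ring_nf

theorem cleared_matching_sub_eq_exp_mul (T x₀ a c : ℝ) :
    c * Real.exp (-a) * (Real.exp (2 * (a - T)) + 1)
        - (-2 * (Real.exp a * x₀ + c / 2 * (Real.exp a - Real.exp (-a))) + 2 * Real.exp (a - T))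
      = Real.exp a * (c * (Real.exp (-2 * T) + 1) - 2 * (Real.exp (-T) - x₀)) := by
  have exp_sub_eq : Real.exp (a - T) = Real.exp a * Real.exp (-T) := by
    rw [sub_eq_add_neg, Real.exp_add]
  linear_combination c * exp_two_mul_sub_mul_exp_neg T a - 2 * exp_sub_eq

theorem cleared_matching_iff (T x₀ a c : ℝ) :
    c * Real.exp (-a) * (Real.exp (2 * (a - T)) + 1)
        = -2 * (Real.exp a * x₀ + c / 2 * (Real.exp a - Real.exp (-a))) + 2 * Real.exp (a - T) ↔
      c * (Real.exp (-2 * T) + 1) = 2 * (Real.exp (-T) - x₀) := by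
  rw [← sub_eq_zero, cleared_matching_sub_eq_exp_mul, mul_eq_zero,
    or_iff_right (Real.exp_ne_zero a), sub_eq_zero]

theorem lq_matching_constant_general
    (T : ℝ) (φ ψ : ℝ → ℝ)
    (hφ : ∀ t : ℝ, φ t = -2 / (Real.exp (2 * (t - T)) + 1))
    (hψ : ∀ t : ℝ, ψ t = 2 * Real.exp (t - T) / (Real.exp (2 * (t - T)) + 1))
    (x₀ a c : ℝ) :
    c * Real.exp (-a)
        = φ a * (Real.exp a * x₀ + c / 2 * (Real.exp a - Real.exp (-a))) + ψ a ↔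
      c = 2 * (Real.exp (-T) - x₀) / (Real.exp (-2 * T) + 1) := by
  have exp_add_one_ne_zero (s : ℝ) : Real.exp s + 1 ≠ 0 := by positivity
  rw [hφ, hψ, div_mul_eq_mul_div, ← add_div, eq_div_iff (exp_add_one_ne_zero _),
    eq_div_iff (exp_add_one_ne_zero _)]
  exact cleared_matching_iff T x₀ a c

/-- For `x₀ ∈ ℝ` and `a ∈ [0, T)`, `c = 2(e^{-T} - x₀)/(e^{-2T} + 1)` is the unique
real number satisfying the matching equation
`c e^{-a} = φ(a)(e^a x₀ + (c/2)(e^a - e^{-a})) + ψ(a)`;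
in particular the solution does not depend on `a`. -/
theorem lq_matching_constant
    (T : ℝ) (φ ψ : ℝ → ℝ)
    (hφ : ∀ t : ℝ, φ t = -2 / (Real.exp (2 * (t - T)) + 1))
    (hψ : ∀ t : ℝ, ψ t = 2 * Real.exp (t - T) / (Real.exp (2 * (t - T)) + 1))
    (x₀ a : ℝ) (ha : 0 ≤ a) (haT : a < T)
    (c : ℝ)
    (hc : c = 2 * (Real.exp (-T) - x₀) / (Real.exp (-2 * T) + 1)) :
    (c * Real.exp (-a)
        = φ a * (Real.exp a * x₀ + c / 2 * (Real.exp a - Real.exp (-a))) + ψ a) ∧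
    (∀ c' : ℝ,
      c' * Real.exp (-a)
          = φ a * (Real.exp a * x₀ + c' / 2 * (Real.exp a - Real.exp (-a))) + ψ a →
      c' = c) := by
  have matching_iff := lq_matching_constant_general T φ ψ hφ hψ x₀ a
  exact ⟨(matching_iff c).mpr hc, fun c' hc' => ((matching_iff c').mp hc').trans hc.symm⟩
end

section
/- Let x₀ ∈ ℝ, a ∈ [0, T), and c := 2(e^{−T} − x₀)/(e^{−2T} + 1). Define p(t) := c·e^{−t} and x̄(t) := e^{t}x₀ + (c/2)(e^{t} − e^{−t}). Then p′(t) = −p(t) and x̄′(t) = x̄(t) + p(t) for every t ∈ ℝ, x̄(0) = x₀, and the matching condition p(a) = φ(a)x̄(a) + ψ(a) holds. (Thus on the initial deterministic interval [0, a] the optimal control is ū(t) = p(t) = c·e^{−t} and the optimal state is x̄(t).) -/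
/-!
The system `p' = -p`, `x' = x + p` conserves `e^t p` and `e^{-t} (x + p / 2)`. Cleared of its
denominator, the feedback law `p = φ x + ψ` reads
`p e^{2(t - T)} + 2 (x + p / 2) = 2 e^{t - T}`, and by the two conservation laws each of the three
terms is `e^t` times a constant. The law is therefore a single linear equation for the initial
costate `c`, the same at every time; at `t = T` it is the transversality condition `p = 1 - x`.
-/

/-- The costate (adjoint process) `p(t) = c e^{-t}` with initial value `c`, which is also the
control. -/
noncomputable def lqCostate (c t : ℝ) : ℝ := c * Real.exp (-t)

/-- The state `x̄(t)` started at `x₀` and driven by the control `lqCostate c`, given by the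
variation of constants formula. -/
noncomputable def lqState (x₀ c t : ℝ) : ℝ :=
  Real.exp t * x₀ + c / 2 * (Real.exp t - Real.exp (-t))

/-- The Riccati coefficient `φ(t)` of the state in the feedback form `p = φ x̄ + ψ` of the costate,
for the horizon `T`. -/
noncomputable def lqFeedbackGain (T t : ℝ) : ℝ := -2 / (Real.exp (2 * (t - T)) + 1)

/-- The inhomogeneous term `ψ(t)` in the feedback form `p = φ x̄ + ψ` of the costate, for the
horizon `T`. -/
noncomputable def lqFeedbackOffset (T t : ℝ) : ℝ :=
  2 * Real.exp (t - T) / (Real.exp (2 * (t - T)) + 1)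

theorem hasDerivAt_lqCostate (c t : ℝ) : HasDerivAt (lqCostate c) (-lqCostate c t) t :=
  ((hasDerivAt_neg t).exp.const_mul c).congr_deriv (by simp [lqCostate])

theorem lqState_zero (x₀ c : ℝ) : lqState x₀ c 0 = x₀ := by
  simp [lqState]

theorem lqState_add_half_lqCostate (x₀ c t : ℝ) :
    lqState x₀ c t + lqCostate c t / 2 = Real.exp t * (x₀ + c / 2) := by
  unfold lqState lqCostate
  ring

theorem hasDerivAt_lqState (x₀ c t : ℝ) :
    HasDerivAt (lqState x₀ c) (lqState x₀ c t + lqCostate c t) t := by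
  have state_eq : lqState x₀ c = fun s => Real.exp s * (x₀ + c / 2) - lqCostate c s / 2 :=
    funext fun s => eq_sub_of_add_eq (lqState_add_half_lqCostate x₀ c s)
  have deriv_eq : Real.exp t * (x₀ + c / 2) - -lqCostate c t / 2 =
      lqState x₀ c t + lqCostate c t := by
    rw [← lqState_add_half_lqCostate]
    ring
  rw [← deriv_eq, state_eq]
  exact ((Real.hasDerivAt_exp t).mul_const _).sub ((hasDerivAt_lqCostate c t).div_const 2)

theorem lqCostate_mul_exp (c T t : ℝ) :
    lqCostate c t * Real.exp (2 * (t - T)) = Real.exp t * (c * Real.exp (-2 * T)) := by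
  have exp_split : Real.exp (-t) * Real.exp (2 * (t - T)) = Real.exp t * Real.exp (-2 * T) := by
    rw [← Real.exp_add, ← Real.exp_add]
    ring_nf
  rw [lqCostate, mul_assoc, exp_split, mul_left_comm]

theorem eq_lqFeedbackGain_mul_add_lqFeedbackOffset_iff (T t x p : ℝ) :
    p = lqFeedbackGain T t * x + lqFeedbackOffset T t ↔
      p * Real.exp (2 * (t - T)) + 2 * (x + p / 2) = 2 * Real.exp (t - T) := by
  have denom_ne : Real.exp (2 * (t - T)) + 1 ≠ 0 := by positivity
  rw [lqFeedbackGain, lqFeedbackOffset, div_mul_eq_mul_div, ← add_div, eq_div_iff denom_ne]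
  constructor <;> intro h <;> linear_combination h

theorem lqCostate_eq_feedback_iff (T x₀ c t : ℝ) :
    lqCostate c t = lqFeedbackGain T t * lqState x₀ c t + lqFeedbackOffset T t ↔
      c = 2 * (Real.exp (-T) - x₀) / (Real.exp (-2 * T) + 1) := by
  have denom_ne : Real.exp (-2 * T) + 1 ≠ 0 := by positivity
  calc
    _ ↔ Real.exp t * (c * Real.exp (-2 * T) + 2 * (x₀ + c / 2)) =
          Real.exp t * (2 * Real.exp (-T)) := by
      rw [eq_lqFeedbackGain_mul_add_lqFeedbackOffset_iff, lqCostate_mul_exp,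
        lqState_add_half_lqCostate, sub_eq_add_neg t T, Real.exp_add, mul_left_comm 2,
        mul_left_comm 2, ← mul_add]
    _ ↔ c * Real.exp (-2 * T) + 2 * (x₀ + c / 2) = 2 * Real.exp (-T) :=
      mul_right_inj' (Real.exp_ne_zero t)
    _ ↔ c * (Real.exp (-2 * T) + 1) = 2 * (Real.exp (-T) - x₀) := by
      constructor <;> intro h <;> linear_combination h
    _ ↔ _ := (eq_div_iff denom_ne).symm

theorem lq_deterministic_interval_optimal_pair_general
    (T : ℝ) (φ ψ : ℝ → ℝ)
    (hφ : ∀ t : ℝ, φ t = -2 / (Real.exp (2 * (t - T)) + 1))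
    (hψ : ∀ t : ℝ, ψ t = 2 * Real.exp (t - T) / (Real.exp (2 * (t - T)) + 1))
    (x₀ c : ℝ) (p xbar : ℝ → ℝ)
    (hp : ∀ t : ℝ, p t = c * Real.exp (-t))
    (hx : ∀ t : ℝ, xbar t = Real.exp t * x₀ + c / 2 * (Real.exp t - Real.exp (-t))) :
    (∀ t : ℝ, HasDerivAt p (-(p t)) t) ∧
    (∀ t : ℝ, HasDerivAt xbar (xbar t + p t) t) ∧
    xbar 0 = x₀ ∧
    ∀ t : ℝ, p t = φ t * xbar t + ψ t ↔
      c = 2 * (Real.exp (-T) - x₀) / (Real.exp (-2 * T) + 1) := by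
  obtain rfl : φ = lqFeedbackGain T := funext hφ
  obtain rfl : ψ = lqFeedbackOffset T := funext hψ
  obtain rfl : p = lqCostate c := funext hp
  obtain rfl : xbar = lqState x₀ c := funext hx
  exact ⟨hasDerivAt_lqCostate c, hasDerivAt_lqState x₀ c, lqState_zero x₀ c,
    lqCostate_eq_feedback_iff T x₀ c⟩

/-- On the initial deterministic interval the optimal pair of the LQ problem is
`ū(t) = p(t) = c e^{-t}` with state `x̄(t) = e^t x₀ + (c/2)(e^t - e^{-t})`:
`p' = -p`, `x̄' = x̄ + p`, `x̄ 0 = x₀`, and the matching condition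
`p a = φ(a) x̄(a) + ψ(a)` holds. -/
theorem lq_deterministic_interval_optimal_pair
    (T : ℝ) (φ ψ : ℝ → ℝ)
    (hφ : ∀ t : ℝ, φ t = -2 / (Real.exp (2 * (t - T)) + 1))
    (hψ : ∀ t : ℝ, ψ t = 2 * Real.exp (t - T) / (Real.exp (2 * (t - T)) + 1))
    (x₀ a : ℝ) (ha : 0 ≤ a) (haT : a < T)
    (c : ℝ)
    (hc : c = 2 * (Real.exp (-T) - x₀) / (Real.exp (-2 * T) + 1))
    (p xbar : ℝ → ℝ)
    (hp : ∀ t : ℝ, p t = c * Real.exp (-t))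
    (hx : ∀ t : ℝ, xbar t = Real.exp t * x₀ + c / 2 * (Real.exp t - Real.exp (-t))) :
    (∀ t : ℝ, HasDerivAt p (-(p t)) t) ∧
    (∀ t : ℝ, HasDerivAt xbar (xbar t + p t) t) ∧
    xbar 0 = x₀ ∧
    p a = φ a * xbar a + ψ a := by
  obtain ⟨costate_ode, state_ode, initial, feedback_iff⟩ :=
    lq_deterministic_interval_optimal_pair_general T φ ψ hφ hψ x₀ c p xbar hp hx
  exact ⟨costate_ode, state_ode, initial, (feedback_iff a).2 hc⟩
end
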